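/- Let (u, m, H̄) be a C^∞ solution of the ergodic MFG system with m > 0, where g is C^∞ on (0,∞) with g'(m(x)) bounded below by a positive constant on T^d. Then there exists a constant C > 0, depending only on u, m and g but not on ε, A or B, such that for every ε > 0, all A ∈ C^∞(T^d), B ∈ C^∞(T^d; ℝ^d), and every classical solution (v, θ) of the linearized discounted system ε v + u + Du·Dv = g'(m) θ + A and ε θ − div(m Dv) − div(θ Du) = 1 − m + div(B) on T^d, one has ‖ε v‖_{L²(T^d)} + ‖θ‖_{L²(T^d)} + ‖Dv‖_{L²(T^d)} ≤ C( ‖A‖_{L²(T^d)} + ‖B‖_{L²(T^d)} + 1 ). -/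

import Mathlib

open MeasureTheory Set

noncomputable def pd (d : ℕ) (i : Fin d) (f : (Fin d → ℝ) → ℝ) : (Fin d → ℝ) → ℝ :=
  fun x => fderiv ℝ f x (Pi.single i 1)

noncomputable def gradSq (d : ℕ) (u : (Fin d → ℝ) → ℝ) (x : Fin d → ℝ) : ℝ :=
  ∑ i, pd d i u x ^ 2

noncomputable def divUp (d : ℕ) (m u : (Fin d → ℝ) → ℝ) (x : Fin d → ℝ) : ℝ :=
  ∑ i, pd d i (fun y => m y * pd d i u y) x

/-- `f` is `ℤ^d`-periodic, i.e. a function on the flat torus `T^d`. -/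
def ZPer (d : ℕ) (f : (Fin d → ℝ) → ℝ) : Prop :=
  ∀ (x : Fin d → ℝ) (k : Fin d → ℤ), f (x + fun i => (k i : ℝ)) = f x

/-- `f` has finite `α`-Hölder seminorm. -/
def HolderSemi (α : ℝ) {E : Type*} [PseudoMetricSpace E] (f : E → ℝ) : Prop :=
  ∃ C : ℝ, 0 ≤ C ∧ ∀ x y, |f x - f y| ≤ C * dist x y ^ α

/-- `f` is of class `C^{1,α}`. -/
def C1Hold (d : ℕ) (α : ℝ) (f : (Fin d → ℝ) → ℝ) : Prop :=
  ContDiff ℝ 1 f ∧ ∀ i, HolderSemi α (pd d i f)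

/-- `f` is of class `C^{2,α}`. -/
def C2Hold (d : ℕ) (α : ℝ) (f : (Fin d → ℝ) → ℝ) : Prop :=
  ContDiff ℝ 2 f ∧ ∀ i j, HolderSemi α (pd d i (pd d j f))

/-- `f` is locally `α`-Hölder on `s`. -/
def LocHolderOn (α : ℝ) (f : ℝ → ℝ) (s : Set ℝ) : Prop :=
  ∀ K : Set ℝ, IsCompact K → K ⊆ s →
    ∃ C : ℝ, 0 ≤ C ∧ ∀ x ∈ K, ∀ y ∈ K, |f x - f y| ≤ C * dist x y ^ α

/-- Standing hypotheses on `g`: strictly increasing and continuous on `[0,∞)`,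
of class `C^{1,α}` on `(0,∞)`. -/
def Ghyp (α : ℝ) (g : ℝ → ℝ) : Prop :=
  StrictMonoOn g (Ici 0) ∧ ContinuousOn g (Ici 0) ∧
    DifferentiableOn ℝ g (Ioi 0) ∧ LocHolderOn α (deriv g) (Ioi 0)

/-- Standing hypotheses on `V`: a `C^{1,α}` function on the torus. -/
def Vhyp (d : ℕ) (α : ℝ) (V : (Fin d → ℝ) → ℝ) : Prop :=
  ZPer d V ∧ C1Hold d α V

/-- The oscillation of `V` over the torus. -/
noncomputable def oscV (d : ℕ) (V : (Fin d → ℝ) → ℝ) : ℝ :=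
  sSup (V '' Icc (0 : Fin d → ℝ) 1) - sInf (V '' Icc (0 : Fin d → ℝ) 1)

/-- Assumption (A1): `g⁻¹(g(1) − osc V) > 0`, i.e. `g(1) − osc V` is attained by `g` on `(0,∞)`. -/
def A1 (d : ℕ) (g : ℝ → ℝ) (V : (Fin d → ℝ) → ℝ) : Prop :=
  g 1 - oscV d V ∈ g '' Ioi (0 : ℝ)

/-- Assumption (A2). -/
def A2 (g : ℝ → ℝ) : Prop :=
  ∃ C₁ C₂ β : ℝ, 0 < C₁ ∧ 0 < C₂ ∧
    (∀ z : ℝ, 0 < z → C₁ * z ^ β ≤ deriv g z) ∧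
    (∀ z : ℝ, 0 ≤ z → g z ≤ C₂ + z * g z)

/-- A classical solution `(u, m)` of the discounted MFG system
`ε u + |Du|²/2 + V = g(m)`, `ε m − div(m Du) = ε` on `T^d`. -/
structure DiscSol (d : ℕ) (α : ℝ) (g : ℝ → ℝ) (V : (Fin d → ℝ) → ℝ) (ε : ℝ)
    (u m : (Fin d → ℝ) → ℝ) : Prop where
  per_u : ZPer d u
  per_m : ZPer d m
  reg_u : C2Hold d α u
  reg_m : C1Hold d α m
  m_nonneg : ∀ x, 0 ≤ m x
  hj : ∀ x, ε * u x + (1 / 2) * gradSq d u x + V x = g (m x)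
  fp : ∀ x, ε * m x - divUp d m u x = ε

/-- A classical solution `(u, m, H̄)` of the ergodic MFG system
`|Du|²/2 + V = g(m) + H̄`, `−div(m Du) = 0`, `m ≥ 0`, `∫ m = 1` on `T^d`. -/
structure ErgSol (d : ℕ) (α : ℝ) (g : ℝ → ℝ) (V : (Fin d → ℝ) → ℝ)
    (u m : (Fin d → ℝ) → ℝ) (H : ℝ) : Prop where
  per_u : ZPer d u
  per_m : ZPer d m
  reg_u : C2Hold d α u
  reg_m : C1Hold d α m
  m_nonneg : ∀ x, 0 ≤ m x
  m_mass : (∫ x in Icc (0 : Fin d → ℝ) 1, m x) = 1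
  hj : ∀ x, (1 / 2) * gradSq d u x + V x = g (m x) + H
  fp : ∀ x, divUp d m u x = 0

/-
Multiply the linearized Hamilton–Jacobi equation by `θ` and the linearized Fokker–Planck equation
by `v` and subtract. The terms in `ε` cancel, and integrating the divergence by parts leaves
`∫ g'(m) θ² + m |Dv|² = ∫ (1 - m) v - (A - u) θ - B · Dv`. Since `1 - m` has mean zero, `v` may be
replaced by `v - ∫ v`, which Poincaré's inequality controls by `Dv`; as `g'(m)` and `m` are bounded
below, `θ` and `Dv` are bounded independently of `ε`. The bound on `ε v` is then read off from the
Hamilton–Jacobi equation.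
-/

section L2

variable {X : Type*} [MeasurableSpace X] {μ : Measure X}

theorem lpNorm_two_eq_sqrt_integral_norm_sq {E : Type*} [NormedAddCommGroup E] {f : X → E}
    (hf : AEStronglyMeasurable f μ) : lpNorm f 2 μ = √(∫ x, ‖f x‖ ^ 2 ∂μ) := by
  rw [lpNorm_eq_integral_norm_rpow_toReal two_ne_zero ENNReal.ofNat_ne_top hf, Real.sqrt_eq_rpow]
  norm_num

theorem lpNorm_two_sq_eq_integral_norm_sq {E : Type*} [NormedAddCommGroup E] {f : X → E}
    (hf : AEStronglyMeasurable f μ) : lpNorm f 2 μ ^ 2 = ∫ x, ‖f x‖ ^ 2 ∂μ := by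
  rw [lpNorm_two_eq_sqrt_integral_norm_sq hf, Real.sq_sqrt (by positivity)]

theorem lpNorm_mono_ae_real {E : Type*} [NormedAddCommGroup E] {p : ENNReal} {f : X → E}
    {g : X → ℝ} (hf : AEStronglyMeasurable f μ) (hg : MemLp g p μ) (h : ∀ᵐ x ∂μ, ‖f x‖ ≤ g x) :
    lpNorm f p μ ≤ lpNorm g p μ := by
  rw [← toReal_eLpNorm hf, ← toReal_eLpNorm hg.aestronglyMeasurable]
  exact ENNReal.toReal_mono hg.eLpNorm_ne_top (eLpNorm_mono_ae_real h)

theorem integral_inner_le_lpNorm_mul_lpNorm {E : Type*} [NormedAddCommGroup E]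
    [InnerProductSpace ℝ E] {f g : X → E} (hf : MemLp f 2 μ) (hg : MemLp g 2 μ) :
    ∫ x, inner ℝ (f x) (g x) ∂μ ≤ lpNorm f 2 μ * lpNorm g 2 μ := by
  have hinner : inner ℝ (hf.toLp f) (hg.toLp g) = ∫ x, inner ℝ (f x) (g x) ∂μ := by
    rw [L2.inner_def]
    refine integral_congr_ae ?_
    filter_upwards [hf.coeFn_toLp, hg.coeFn_toLp] with x hfx hgx
    rw [hfx, hgx]
  simpa only [hinner, Lp.norm_toLp, toReal_eLpNorm hf.1, toReal_eLpNorm hg.1] using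
    real_inner_le_norm (hf.toLp f) (hg.toLp g)

theorem integral_mul_le_lpNorm_mul_lpNorm {f g : X → ℝ} (hf : MemLp f 2 μ) (hg : MemLp g 2 μ) :
    ∫ x, f x * g x ∂μ ≤ lpNorm f 2 μ * lpNorm g 2 μ := by
  simpa [mul_comm] using integral_inner_le_lpNorm_mul_lpNorm hf hg

theorem sq_integral_le_integral_sq [IsProbabilityMeasure μ] {f : X → ℝ} (hf : MemLp f 2 μ) :
    (∫ x, f x ∂μ) ^ 2 ≤ ∫ x, f x ^ 2 ∂μ := by
  have hvar := ProbabilityTheory.variance_eq_sub hf ▸ ProbabilityTheory.variance_nonneg f μ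
  simpa using hvar

end L2

/-- Lebesgue measure on the unit cube `[0,1]^d`, that is, the Haar probability measure of `T^d`. -/
noncomputable abbrev cubeMeasure (d : ℕ) : Measure (Fin d → ℝ) :=
  volume.restrict (Icc 0 1)

local notation "‖" f "‖₂" => lpNorm f 2 (cubeMeasure _)

instance (d : ℕ) : IsProbabilityMeasure (cubeMeasure d) :=
  ⟨by simp [Real.volume_Icc_pi]⟩

/-- The gradient of `f`, with values in Euclidean space so that its norm is the one of `gradSq`. -/
noncomputable def grad {d : ℕ} (f : (Fin d → ℝ) → ℝ) (x : Fin d → ℝ) : EuclideanSpace ℝ (Fin d) :=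
  WithLp.toLp 2 fun i => pd d i f x

/-- The divergence of a vector field. -/
noncomputable def divergence {d : ℕ} (F : (Fin d → ℝ) → EuclideanSpace ℝ (Fin d))
    (x : Fin d → ℝ) : ℝ :=
  ∑ i, pd d i (fun y => F y i) x

section Torus

variable {d : ℕ}

theorem memLp_cubeMeasure_of_continuous {E : Type*} [NormedAddCommGroup E]
    [SecondCountableTopology E] {f : (Fin d → ℝ) → E} (hf : Continuous f) (p : ENNReal) :
    MemLp f p (cubeMeasure d) := by
  obtain ⟨C, hC⟩ := isCompact_Icc.exists_bound_of_continuousOn hf.continuousOn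
  exact .of_bound hf.aestronglyMeasurable C (ae_restrict_of_forall_mem measurableSet_Icc hC)

theorem integrable_cubeMeasure_of_continuous {f : (Fin d → ℝ) → ℝ}
    (hf : Continuous f) : Integrable f (cubeMeasure d) :=
  hf.continuousOn.integrableOn_compact isCompact_Icc

theorem contDiff_pd {n : WithTop ℕ∞} {f : (Fin d → ℝ) → ℝ} (hf : ContDiff ℝ (n + 1) f)
    (i : Fin d) : ContDiff ℝ n (pd d i f) :=
  (hf.fderiv_right le_rfl).clm_apply contDiff_const

theorem continuous_pd {f : (Fin d → ℝ) → ℝ} (hf : ContDiff ℝ 1 f) (i : Fin d) :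
    Continuous (pd d i f) :=
  (contDiff_pd (n := 0) (by simpa using hf) i).continuous

theorem contDiff_grad {n : WithTop ℕ∞} {f : (Fin d → ℝ) → ℝ} (hf : ContDiff ℝ (n + 1) f) :
    ContDiff ℝ n (grad f) :=
  contDiff_euclidean.mpr fun i => contDiff_pd hf i

theorem continuous_grad {f : (Fin d → ℝ) → ℝ} (hf : ContDiff ℝ 1 f) : Continuous (grad f) :=
  (contDiff_grad (n := 0) (by simpa using hf)).continuous

theorem continuous_divergence {F : (Fin d → ℝ) → EuclideanSpace ℝ (Fin d)} (hF : ContDiff ℝ 1 F) :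
    Continuous (divergence F) :=
  continuous_finsetSum _ fun i _ => continuous_pd (contDiff_euclidean.mp hF i) i

theorem norm_grad_sq (f : (Fin d → ℝ) → ℝ) (x : Fin d → ℝ) : ‖grad f x‖ ^ 2 = gradSq d f x := by
  simp [EuclideanSpace.real_norm_sq_eq, grad, gradSq]

theorem inner_grad (F : EuclideanSpace ℝ (Fin d)) (f : (Fin d → ℝ) → ℝ) (x : Fin d → ℝ) :
    inner ℝ F (grad f x) = ∑ i, F i * pd d i f x := by
  simp [PiLp.inner_apply, grad, mul_comm]

theorem fderiv_apply_eq_inner_grad (f : (Fin d → ℝ) → ℝ) (x z : Fin d → ℝ) :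
    fderiv ℝ f x z = inner ℝ (WithLp.toLp 2 z) (grad f x) := by
  conv_lhs => rw [pi_eq_sum_univ' z]
  simp [inner_grad, pd, map_sum]

theorem pd_mul {f h : (Fin d → ℝ) → ℝ} {x : Fin d → ℝ} (hf : DifferentiableAt ℝ f x)
    (hh : DifferentiableAt ℝ h x) (i : Fin d) :
    pd d i (fun y => f y * h y) x = f x * pd d i h x + h x * pd d i f x := by
  simp [pd, fderiv_fun_mul hf hh]

theorem divergence_add {F G : (Fin d → ℝ) → EuclideanSpace ℝ (Fin d)} {x : Fin d → ℝ}
    (hF : DifferentiableAt ℝ F x) (hG : DifferentiableAt ℝ G x) :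
    divergence (fun y => F y + G y) x = divergence F x + divergence G x := by
  simp only [divergence, ← Finset.sum_add_distrib]
  refine Finset.sum_congr rfl fun i _ => ?_
  have hFi := differentiableAt_euclidean.mp hF i
  have hGi := differentiableAt_euclidean.mp hG i
  simp [pd, fderiv_fun_add hFi hGi]

theorem divergence_smul {f : (Fin d → ℝ) → ℝ} {F : (Fin d → ℝ) → EuclideanSpace ℝ (Fin d)}
    {x : Fin d → ℝ} (hf : DifferentiableAt ℝ f x) (hF : DifferentiableAt ℝ F x) :
    divergence (fun y => f y • F y) x = f x * divergence F x + inner ℝ (F x) (grad f x) := by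
  simp only [divergence, inner_grad, Finset.mul_sum, ← Finset.sum_add_distrib]
  exact Finset.sum_congr rfl fun i _ => pd_mul hf (differentiableAt_euclidean.mp hF i) i

namespace ZPer

theorem pd {f : (Fin d → ℝ) → ℝ} (hf : ZPer d f) (i : Fin d) : ZPer d (pd d i f) := by
  intro x k
  simp only [_root_.pd, ← fderiv_comp_add_right, hf _ k]

theorem add {f h : (Fin d → ℝ) → ℝ} (hf : ZPer d f) (hh : ZPer d h) :
    ZPer d fun x => f x + h x := fun x k => by
  simp only [hf x k, hh x k]

theorem mul {f h : (Fin d → ℝ) → ℝ} (hf : ZPer d f) (hh : ZPer d h) :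
    ZPer d fun x => f x * h x := fun x k => by
  simp only [hf x k, hh x k]

theorem add_single {f : (Fin d → ℝ) → ℝ} (hf : ZPer d f) (x : Fin d → ℝ) (i : Fin d) :
    f (x + Pi.single i 1) = f x := by
  rw [← hf x (Pi.single i 1)]
  congr with j
  simp [Pi.single_apply]

open scoped Pointwise in
theorem integral_comp_add_right {f : (Fin d → ℝ) → ℝ} (hf : ZPer d f) (z : Fin d → ℝ) :
    ∫ x, f (x + z) ∂cubeMeasure d = ∫ x, f x ∂cubeMeasure d := by
  let b := Pi.basisFun ℝ (Fin d)
  have hcube : ZSpan.fundamentalDomain b =ᵐ[volume] Icc (0 : Fin d → ℝ) 1 := by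
    rw [ZSpan.fundamentalDomain_pi_basisFun]
    exact Measure.univ_pi_Ico_ae_eq_Icc
  have hinv (k : (Submodule.span ℤ (range b)).toAddSubgroup) (x : Fin d → ℝ) :
      f (k +ᵥ x) = f x := by
    choose n hn using (b.mem_span_iff_repr_mem ℤ _).mp k.2
    have hk : (k : Fin d → ℝ) = fun i => (n i : ℝ) := by
      ext i
      simpa [b] using (hn i).symm
    rw [AddSubgroup.vadd_def, vadd_eq_add, add_comm, hk, hf]
  have : Countable (Submodule.span ℤ (range b)).toAddSubgroup :=
    inferInstanceAs (Countable (Submodule.span ℤ (range b)))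
  have hdom := ZSpan.isAddFundamentalDomain' b volume
  rw [← setIntegral_congr_set hcube, ← setIntegral_congr_set hcube]
  calc
    ∫ x in ZSpan.fundamentalDomain b, f (x + z)
      = ∫ x in z +ᵥ ZSpan.fundamentalDomain b, f x := by
        simp only [add_comm _ z]
        exact ((measurePreserving_add_left volume z).setIntegral_image_emb
          (measurableEmbedding_addLeft z) f _).symm
    _ = ∫ x in ZSpan.fundamentalDomain b, f x := (hdom.vadd_of_comm z).setIntegral_eq hdom hinv

end ZPer

theorem integral_divergence_eq_zero {F : (Fin d → ℝ) → EuclideanSpace ℝ (Fin d)}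
    (hF : ContDiff ℝ 1 F) (hper : ∀ i, ZPer d fun x => F x i) :
    ∫ x, divergence F x ∂cubeMeasure d = 0 := by
  cases d with
  | zero => simp [divergence]
  | succ n =>
    have hFi := contDiff_euclidean.mp hF
    have h := integral_divergence_of_hasFDerivAt_off_countable' 0 1 zero_le_one
      (fun i x => F x i) (fun i => fderiv ℝ fun x => F x i) ∅ countable_empty
      (fun i => (hFi i).continuous.continuousOn)
      (fun x _ i => ((hFi i).differentiable one_ne_zero x).hasFDerivAt)
      (integrable_cubeMeasure_of_continuous (continuous_divergence hF))
    refine h.trans (Finset.sum_eq_zero fun i _ => sub_eq_zero.mpr ?_)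
    have hface (y : Fin n → ℝ) :
        (i.insertNth 1 y : Fin (n + 1) → ℝ) = i.insertNth 0 y + Pi.single i 1 := by
      ext j
      refine Fin.succAboveCases i ?_ (fun k => ?_) j <;> simp
    refine integral_congr_ae (.of_forall fun y => ?_)
    exact (congrArg (fun x => F x i) (hface y)).trans ((hper i).add_single _ i)

theorem integral_mul_divergence_eq_neg {f : (Fin d → ℝ) → ℝ}
    {F : (Fin d → ℝ) → EuclideanSpace ℝ (Fin d)} (hf : ContDiff ℝ 1 f) (hF : ContDiff ℝ 1 F)
    (hfper : ZPer d f) (hFper : ∀ i, ZPer d fun x => F x i) :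
    ∫ x, f x * divergence F x ∂cubeMeasure d = -∫ x, inner ℝ (F x) (grad f x) ∂cubeMeasure d := by
  have hprod (x : Fin d → ℝ) := divergence_smul (hf.differentiable one_ne_zero x)
    (hF.differentiable one_ne_zero x)
  have hdiv : ∫ x, divergence (fun y => f y • F y) x ∂cubeMeasure d = 0 :=
    integral_divergence_eq_zero (hf.smul hF) fun i => hfper.mul (hFper i)
  have hfc := hf.continuous
  have hFc := hF.continuous
  have hdivc := continuous_divergence hF
  have hgradc := continuous_grad hf
  simp only [hprod] at hdiv
  rw [integral_add (integrable_cubeMeasure_of_continuous (by fun_prop))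
    (integrable_cubeMeasure_of_continuous (by fun_prop))] at hdiv
  exact eq_neg_of_add_eq_zero_left hdiv

theorem setIntegral_setIntegral_swap_of_continuous {X Y : Type*}
    [TopologicalSpace X] [T2Space X] [SecondCountableTopology X] [MeasurableSpace X] [BorelSpace X]
    [TopologicalSpace Y] [T2Space Y] [SecondCountableTopology Y] [MeasurableSpace Y] [BorelSpace Y]
    {μ : Measure X} [SFinite μ] [IsFiniteMeasureOnCompacts μ]
    {ν : Measure Y} [SFinite ν] [IsFiniteMeasureOnCompacts ν]
    {K : Set X} {L : Set Y} (hK : IsCompact K) (hL : IsCompact L) {F : X → Y → ℝ}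
    (hF : Continuous (Function.uncurry F)) :
    ∫ x in K, ∫ y in L, F x y ∂ν ∂μ = ∫ y in L, ∫ x in K, F x y ∂μ ∂ν := by
  apply integral_integral_swap
  rw [Measure.prod_restrict]
  exact hF.continuousOn.integrableOn_compact (hK.prod hL)

theorem sub_eq_integral_inner_grad {f : (Fin d → ℝ) → ℝ} (hf : ContDiff ℝ 1 f)
    (x z : Fin d → ℝ) :
    f (x + z) - f x = ∫ t in Icc (0 : ℝ) 1, inner ℝ (WithLp.toLp 2 z) (grad f (x + t • z)) := by
  have hline (t : ℝ) : HasDerivAt (fun t : ℝ => x + t • z) z t := by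
    simpa using ((hasDerivAt_id t).smul_const z).const_add x
  have hderiv (t : ℝ) : HasDerivAt (fun t : ℝ => f (x + t • z))
      (inner ℝ (WithLp.toLp 2 z) (grad f (x + t • z))) t := by
    rw [← fderiv_apply_eq_inner_grad]
    exact (hf.differentiable one_ne_zero _).hasFDerivAt.comp_hasDerivAt t (hline t)
  have hcont := continuous_grad hf
  have hftc := intervalIntegral.integral_eq_sub_of_hasDerivAt (fun t _ => hderiv t)
    (Continuous.intervalIntegrable (by fun_prop) 0 1)
  rw [intervalIntegral.integral_of_le zero_le_one, ← integral_Icc_eq_integral_Ioc] at hftc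
  simpa using hftc.symm

theorem sq_sub_le_integral_norm_grad_sq {f : (Fin d → ℝ) → ℝ} (hf : ContDiff ℝ 1 f)
    (x z : Fin d → ℝ) :
    (f (x + z) - f x) ^ 2
      ≤ ‖WithLp.toLp 2 z‖ ^ 2 * ∫ t in Icc (0 : ℝ) 1, ‖grad f (x + t • z)‖ ^ 2 := by
  have hcont := continuous_grad hf
  have : IsProbabilityMeasure (volume.restrict (Icc (0 : ℝ) 1)) := ⟨by simp⟩
  have hinner : Continuous fun t : ℝ =>
      inner ℝ (WithLp.toLp 2 z) (grad f (x + t • z)) := by fun_prop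
  rw [sub_eq_integral_inner_grad hf, ← integral_const_mul]
  refine (sq_integral_le_integral_sq ?_).trans ?_
  · exact (memLp_two_iff_integrable_sq hinner.aestronglyMeasurable).mpr
      (Continuous.integrableOn_Icc (by fun_prop))
  · refine setIntegral_mono (Continuous.integrableOn_Icc (by fun_prop))
      (Continuous.integrableOn_Icc (by fun_prop)) fun t => ?_
    rw [← mul_pow]
    exact sq_le_sq' (neg_le_of_abs_le (abs_real_inner_le_norm _ _)) (real_inner_le_norm _ _)

theorem integral_sq_sub_le_norm_sq_mul {f : (Fin d → ℝ) → ℝ} (hf : ContDiff ℝ 1 f)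
    (hper : ZPer d f) (z : Fin d → ℝ) :
    ∫ x, (f (x + z) - f x) ^ 2 ∂cubeMeasure d
      ≤ ‖WithLp.toLp 2 z‖ ^ 2 * ∫ x, ‖grad f x‖ ^ 2 ∂cubeMeasure d := by
  have hcont := continuous_grad hf
  have hfc := hf.continuous
  have hgradper : ZPer d fun x => ‖grad f x‖ ^ 2 := fun x k => by
    simp only [norm_grad_sq, gradSq, hper.pd _ x k]
  have hslice : Continuous fun x => ∫ t in Icc (0 : ℝ) 1, ‖grad f (x + t • z)‖ ^ 2 :=
    continuous_parametric_integral_of_continuous (by fun_prop) isCompact_Icc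
  calc
    ∫ x, (f (x + z) - f x) ^ 2 ∂cubeMeasure d
      ≤ ∫ x, ‖WithLp.toLp 2 z‖ ^ 2 * (∫ t in Icc (0 : ℝ) 1, ‖grad f (x + t • z)‖ ^ 2)
          ∂cubeMeasure d :=
        integral_mono (integrable_cubeMeasure_of_continuous (by fun_prop))
          (integrable_cubeMeasure_of_continuous (by fun_prop))
          fun x => sq_sub_le_integral_norm_grad_sq hf x z
    _ = ‖WithLp.toLp 2 z‖ ^ 2 * ∫ t in Icc (0 : ℝ) 1, (∫ x, ‖grad f (x + t • z)‖ ^ 2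
          ∂cubeMeasure d) := by
        rw [integral_const_mul, setIntegral_setIntegral_swap_of_continuous isCompact_Icc
          isCompact_Icc (by fun_prop)]
    _ = ‖WithLp.toLp 2 z‖ ^ 2 * ∫ x, ‖grad f x‖ ^ 2 ∂cubeMeasure d := by
        simp [hgradper.integral_comp_add_right]

theorem norm_toLp_sq_le_of_mem_Icc {z : Fin d → ℝ} (hz : z ∈ Icc 0 1) :
    ‖WithLp.toLp 2 z‖ ^ 2 ≤ d := by
  rw [EuclideanSpace.real_norm_sq_eq]
  calc
    ∑ i, z i ^ 2 ≤ ∑ _i : Fin d, (1 : ℝ) :=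
      Finset.sum_le_sum fun i _ => pow_le_one₀ (hz.1 i) (hz.2 i)
    _ = d := by simp

theorem poincare_integral_sq_sub_le {f : (Fin d → ℝ) → ℝ} (hf : ContDiff ℝ 1 f)
    (hper : ZPer d f) :
    ∫ x, (f x - ∫ y, f y ∂cubeMeasure d) ^ 2 ∂cubeMeasure d
      ≤ d * ∫ x, ‖grad f x‖ ^ 2 ∂cubeMeasure d := by
  have hfc := hf.continuous
  have hmean (x : Fin d → ℝ) :
      (f x - ∫ y, f y ∂cubeMeasure d) ^ 2 ≤ ∫ z, (f (x + z) - f x) ^ 2 ∂cubeMeasure d := by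
    have hshift : ∫ z, (f (x + z) - f x) ∂cubeMeasure d = ∫ y, f y ∂cubeMeasure d - f x := by
      rw [integral_sub (integrable_cubeMeasure_of_continuous (by fun_prop)) (by simp)]
      simp [add_comm x, hper.integral_comp_add_right]
    rw [sub_sq_comm, ← hshift]
    exact sq_integral_le_integral_sq (memLp_cubeMeasure_of_continuous (by fun_prop) 2)
  have hslice : Continuous fun x => ∫ z, (f (x + z) - f x) ^ 2 ∂cubeMeasure d :=
    continuous_parametric_integral_of_continuous (by fun_prop) isCompact_Icc
  have hslice' : Continuous fun z => ∫ x, (f (x + z) - f x) ^ 2 ∂cubeMeasure d :=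
    continuous_parametric_integral_of_continuous (by fun_prop) isCompact_Icc
  calc
    ∫ x, (f x - ∫ y, f y ∂cubeMeasure d) ^ 2 ∂cubeMeasure d
      ≤ ∫ x, ∫ z, (f (x + z) - f x) ^ 2 ∂cubeMeasure d ∂cubeMeasure d :=
        integral_mono (integrable_cubeMeasure_of_continuous (by fun_prop))
          (integrable_cubeMeasure_of_continuous hslice) hmean
    _ = ∫ z, ∫ x, (f (x + z) - f x) ^ 2 ∂cubeMeasure d ∂cubeMeasure d :=
        setIntegral_setIntegral_swap_of_continuous isCompact_Icc isCompact_Icc (by fun_prop)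
    _ ≤ ∫ _z, d * ∫ x, ‖grad f x‖ ^ 2 ∂cubeMeasure d ∂cubeMeasure d := by
        refine setIntegral_mono_on (integrable_cubeMeasure_of_continuous hslice')
          (integrable_const _) measurableSet_Icc fun z hz =>
          (integral_sq_sub_le_norm_sq_mul hf hper z).trans ?_
        gcongr
        exact norm_toLp_sq_le_of_mem_Icc hz
    _ = d * ∫ x, ‖grad f x‖ ^ 2 ∂cubeMeasure d := by simp

theorem poincare_lpNorm_sub_le {f : (Fin d → ℝ) → ℝ} (hf : ContDiff ℝ 1 f) (hper : ZPer d f) :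
    ‖fun x => f x - ∫ y, f y ∂cubeMeasure d‖₂ ≤ √d * ‖grad f‖₂ := by
  have hfc := hf.continuous
  rw [lpNorm_two_eq_sqrt_integral_norm_sq (by fun_prop),
    lpNorm_two_eq_sqrt_integral_norm_sq (continuous_grad hf).aestronglyMeasurable,
    ← Real.sqrt_mul (by positivity)]
  simpa using Real.sqrt_le_sqrt (poincare_integral_sq_sub_le hf hper)

theorem integral_mul_le_of_integral_eq_zero {f q : (Fin d → ℝ) → ℝ} (hf : ContDiff ℝ 1 f)
    (hper : ZPer d f) (hq : Continuous q) (hq0 : ∫ x, q x ∂cubeMeasure d = 0) :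
    ∫ x, q x * f x ∂cubeMeasure d ≤ √d * ‖q‖₂ * ‖grad f‖₂ := by
  have hfc := hf.continuous
  calc
    ∫ x, q x * f x ∂cubeMeasure d
      = ∫ x, q x * (f x - ∫ y, f y ∂cubeMeasure d) ∂cubeMeasure d := by
        simp only [mul_sub]
        rw [integral_sub (integrable_cubeMeasure_of_continuous (by fun_prop))
          (integrable_cubeMeasure_of_continuous (by fun_prop)), integral_mul_const, hq0, zero_mul,
          sub_zero]
    _ ≤ ‖q‖₂ * ‖fun x => f x - ∫ y, f y ∂cubeMeasure d‖₂ :=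
        integral_mul_le_lpNorm_mul_lpNorm (memLp_cubeMeasure_of_continuous hq 2)
          (memLp_cubeMeasure_of_continuous (by fun_prop) 2)
    _ ≤ ‖q‖₂ * (√d * ‖grad f‖₂) := by
        exact mul_le_mul_of_nonneg_left (poincare_lpNorm_sub_le hf hper) lpNorm_nonneg
    _ = √d * ‖q‖₂ * ‖grad f‖₂ := by ring

theorem add_le_of_mul_sq_add_sq_le {κ X Y a c : ℝ} (hκ : 0 < κ) (hX : 0 ≤ X) (hY : 0 ≤ Y)
    (ha : 0 ≤ a) (hc : 0 ≤ c) (h : κ * (X ^ 2 + Y ^ 2) ≤ a * X + c * Y) :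
    X + Y ≤ 2 / κ * (a + c) := by
  rcases (add_nonneg hX hY).eq_or_lt with h0 | hpos
  · rw [← h0]
    positivity
  · have hsum : κ * (X + Y) * (X + Y) ≤ 2 * (a + c) * (X + Y) := by
      nlinarith [mul_nonneg hκ.le (sq_nonneg (X - Y)), mul_nonneg ha hY, mul_nonneg hc hX]
    rw [div_mul_eq_mul_div, le_div_iff₀ hκ, mul_comm]
    exact le_of_mul_le_mul_right hsum hpos

/-- The flux `m Dv + θ b + B` whose divergence enters the linearized Fokker–Planck equation. -/
noncomputable def flux (m : (Fin d → ℝ) → ℝ) (b B : (Fin d → ℝ) → EuclideanSpace ℝ (Fin d))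
    (v θ : (Fin d → ℝ) → ℝ) (x : Fin d → ℝ) : EuclideanSpace ℝ (Fin d) :=
  m x • grad v x + θ x • b x + B x

theorem divergence_flux {m v θ : (Fin d → ℝ) → ℝ} {b B : (Fin d → ℝ) → EuclideanSpace ℝ (Fin d)}
    {x : Fin d → ℝ} (hm : DifferentiableAt ℝ m x) (hv : DifferentiableAt ℝ (grad v) x)
    (hθ : DifferentiableAt ℝ θ x) (hb : DifferentiableAt ℝ b x) (hB : DifferentiableAt ℝ B x) :
    divergence (flux m b B v θ) x
      = divUp d m v x + divergence (fun y => θ y • b y) x + divergence B x := by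
  unfold flux
  rw [divergence_add ((hm.fun_smul hv).fun_add (hθ.fun_smul hb)) hB,
    divergence_add (hm.fun_smul hv) (hθ.fun_smul hb)]
  rfl

/-- A classical solution `(v, θ)` of the linear system `ε v + b·Dv = G θ + a`,
`ε θ − div(m Dv + θ b + B) = q` on `T^d`. The linearized discounted system is the case
`b = Du`, `G = g'(m)`, `a = A − u`, `q = 1 − m`. -/
structure LinearizedSol (ε : ℝ) (G m a q : (Fin d → ℝ) → ℝ)
    (b B : (Fin d → ℝ) → EuclideanSpace ℝ (Fin d)) (v θ : (Fin d → ℝ) → ℝ) : Prop where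
  cont_G : Continuous G
  cont_m : Continuous m
  cont_a : Continuous a
  cont_q : Continuous q
  cont_B : Continuous B
  cont_θ : Continuous θ
  reg_v : ContDiff ℝ 1 v
  reg_flux : ContDiff ℝ 1 (flux m b B v θ)
  per_v : ZPer d v
  per_flux : ∀ i, ZPer d fun x => flux m b B v θ x i
  hj : ∀ x, ε * v x + inner ℝ (b x) (grad v x) = G x * θ x + a x
  fp : ∀ x, ε * θ x - divergence (flux m b B v θ) x = q x

namespace LinearizedSol

variable {ε κ M : ℝ} {G m a q v θ : (Fin d → ℝ) → ℝ}
  {b B : (Fin d → ℝ) → EuclideanSpace ℝ (Fin d)}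

theorem energy_density_eq (h : LinearizedSol ε G m a q b B v θ) (x : Fin d → ℝ) :
    G x * θ x ^ 2 + m x * ‖grad v x‖ ^ 2
      = q x * v x - a x * θ x - inner ℝ (B x) (grad v x)
        + (v x * divergence (flux m b B v θ) x + inner ℝ (flux m b B v θ x) (grad v x)) := by
  have hflux : inner ℝ (flux m b B v θ x) (grad v x) = m x * ‖grad v x‖ ^ 2
      + θ x * inner ℝ (b x) (grad v x) + inner ℝ (B x) (grad v x) := by
    simp only [flux, inner_add_left, real_inner_smul_left, real_inner_self_eq_norm_sq]
  linear_combination v x * h.fp x - θ x * h.hj x - hflux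

theorem energy_identity (h : LinearizedSol ε G m a q b B v θ) :
    ∫ x, (G x * θ x ^ 2 + m x * ‖grad v x‖ ^ 2) ∂cubeMeasure d
      = ∫ x, q x * v x ∂cubeMeasure d - ∫ x, a x * θ x ∂cubeMeasure d
        - ∫ x, inner ℝ (B x) (grad v x) ∂cubeMeasure d := by
  have hI {f : (Fin d → ℝ) → ℝ} (hf : Continuous f) := integrable_cubeMeasure_of_continuous hf
  have ha := h.cont_a
  have hq := h.cont_q
  have hB := h.cont_B
  have hθ := h.cont_θ
  have hv := h.reg_v.continuous
  have hgrad := continuous_grad h.reg_v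
  have hflux := h.reg_flux.continuous
  have hdiv := continuous_divergence h.reg_flux
  simp only [h.energy_density_eq]
  rw [integral_add (hI (by fun_prop)) (hI (by fun_prop)),
    integral_sub (hI (by fun_prop)) (hI (by fun_prop)),
    integral_sub (hI (by fun_prop)) (hI (by fun_prop)),
    integral_add (hI (by fun_prop)) (hI (by fun_prop)),
    integral_mul_divergence_eq_neg h.reg_v h.reg_flux h.per_v h.per_flux, neg_add_cancel, add_zero]

theorem mul_sq_add_sq_le_integral (h : LinearizedSol ε G m a q b B v θ)
    (hG : ∀ x ∈ Icc 0 1, κ ≤ G x) (hm : ∀ x ∈ Icc 0 1, κ ≤ m x) :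
    κ * (‖θ‖₂ ^ 2 + ‖grad v‖₂ ^ 2)
      ≤ ∫ x, (G x * θ x ^ 2 + m x * ‖grad v x‖ ^ 2) ∂cubeMeasure d := by
  have hGc := h.cont_G
  have hmc := h.cont_m
  have hθ := h.cont_θ
  have hgrad := continuous_grad h.reg_v
  rw [lpNorm_two_sq_eq_integral_norm_sq hθ.aestronglyMeasurable,
    lpNorm_two_sq_eq_integral_norm_sq hgrad.aestronglyMeasurable,
    ← integral_add (integrable_cubeMeasure_of_continuous (by fun_prop))
      (integrable_cubeMeasure_of_continuous (by fun_prop)), ← integral_const_mul]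
  refine setIntegral_mono_on (integrable_cubeMeasure_of_continuous (by fun_prop))
    (integrable_cubeMeasure_of_continuous (by fun_prop)) measurableSet_Icc fun x hx => ?_
  rw [mul_add, Real.norm_eq_abs, sq_abs]
  gcongr
  exacts [hG x hx, hm x hx]

theorem energy_estimate (h : LinearizedSol ε G m a q b B v θ) (hκ : 0 < κ)
    (hG : ∀ x ∈ Icc 0 1, κ ≤ G x) (hm : ∀ x ∈ Icc 0 1, κ ≤ m x)
    (hq0 : ∫ x, q x ∂cubeMeasure d = 0) :
    ‖θ‖₂ + ‖grad v‖₂ ≤ 2 / κ * (‖a‖₂ + (√d * ‖q‖₂ + ‖B‖₂)) := by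
  have haθ := integral_mul_le_lpNorm_mul_lpNorm
    (memLp_cubeMeasure_of_continuous h.cont_a.neg 2) (memLp_cubeMeasure_of_continuous h.cont_θ 2)
  have hqv := integral_mul_le_of_integral_eq_zero h.reg_v h.per_v h.cont_q hq0
  have hBv := integral_inner_le_lpNorm_mul_lpNorm
    (memLp_cubeMeasure_of_continuous h.cont_B.neg 2)
    (memLp_cubeMeasure_of_continuous (continuous_grad h.reg_v) 2)
  simp only [Pi.neg_apply, neg_mul, inner_neg_left, integral_neg, lpNorm_neg] at haθ hBv
  refine add_le_of_mul_sq_add_sq_le hκ lpNorm_nonneg lpNorm_nonneg lpNorm_nonneg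
    (add_nonneg (mul_nonneg (Real.sqrt_nonneg _) lpNorm_nonneg) lpNorm_nonneg) ?_
  linarith [h.mul_sq_add_sq_le_integral hG hm, h.energy_identity]

theorem lpNorm_mul_le (h : LinearizedSol ε G m a q b B v θ)
    (hG : ∀ x ∈ Icc 0 1, ‖G x‖ ≤ M) (hb : ∀ x ∈ Icc 0 1, ‖b x‖ ≤ M) :
    ‖fun x => ε * v x‖₂ ≤ M * (‖θ‖₂ + ‖grad v‖₂) + ‖a‖₂ := by
  have hM : 0 ≤ M := (norm_nonneg _).trans (hG 0 (by simp))
  have hv := h.reg_v.continuous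
  have hθ := memLp_cubeMeasure_of_continuous h.cont_θ 2
  have hgrad := memLp_cubeMeasure_of_continuous (continuous_grad h.reg_v) 2
  have ha := memLp_cubeMeasure_of_continuous h.cont_a 2
  have hpoint : ∀ x ∈ Icc 0 1, ‖ε * v x‖ ≤ M * (‖θ x‖ + ‖grad v x‖) + ‖a x‖ := fun x hx => by
    calc
      ‖ε * v x‖ = ‖G x * θ x - inner ℝ (b x) (grad v x) + a x‖ := by
        congr 1
        linear_combination h.hj x
      _ ≤ ‖G x * θ x‖ + ‖inner ℝ (b x) (grad v x)‖ + ‖a x‖ :=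
        (norm_add_le _ _).trans (by gcongr; exact norm_sub_le _ _)
      _ ≤ ‖G x‖ * ‖θ x‖ + ‖b x‖ * ‖grad v x‖ + ‖a x‖ := by
        gcongr
        exacts [norm_mul_le _ _, norm_inner_le_norm _ _]
      _ ≤ M * ‖θ x‖ + M * ‖grad v x‖ + ‖a x‖ := by
        gcongr
        exacts [hG x hx, hb x hx]
      _ = M * (‖θ x‖ + ‖grad v x‖) + ‖a x‖ := by ring
  have hsum := hθ.norm.add hgrad.norm
  calc
    ‖fun x => ε * v x‖₂
      ≤ ‖M • ((fun x => ‖θ x‖) + fun x => ‖grad v x‖) + fun x => ‖a x‖‖₂ :=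
        lpNorm_mono_ae_real (by fun_prop) ((hsum.const_smul M).add ha.norm)
          (ae_restrict_of_forall_mem measurableSet_Icc hpoint)
    _ ≤ M * ‖(fun x => ‖θ x‖) + fun x => ‖grad v x‖‖₂ + ‖a‖₂ := by
        refine (lpNorm_add_le (hsum.const_smul M) one_le_two).trans_eq ?_
        rw [lpNorm_const_smul, lpNorm_norm ha.1, coe_nnnorm, Real.norm_of_nonneg hM]
    _ ≤ M * (‖θ‖₂ + ‖grad v‖₂) + ‖a‖₂ := by
        gcongr
        refine (lpNorm_add_le hθ.norm one_le_two).trans_eq ?_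
        rw [lpNorm_norm hθ.1, lpNorm_norm hgrad.1]

theorem lpNorm_add_lpNorm_add_lpNorm_le (h : LinearizedSol ε G m a q b B v θ) (hκ : 0 < κ)
    (hG : ∀ x ∈ Icc 0 1, κ ≤ G x) (hm : ∀ x ∈ Icc 0 1, κ ≤ m x)
    (hGM : ∀ x ∈ Icc 0 1, ‖G x‖ ≤ M) (hbM : ∀ x ∈ Icc 0 1, ‖b x‖ ≤ M)
    (hq0 : ∫ x, q x ∂cubeMeasure d = 0) :
    ‖fun x => ε * v x‖₂ + ‖θ‖₂ + ‖grad v‖₂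
      ≤ ((M + 1) * (2 / κ) + 1) * (‖a‖₂ + (√d * ‖q‖₂ + ‖B‖₂)) := by
  have hM : 0 ≤ M := (norm_nonneg _).trans (hGM 0 (by simp))
  have hqB : 0 ≤ √d * ‖q‖₂ + ‖B‖₂ :=
    add_nonneg (mul_nonneg (Real.sqrt_nonneg _) lpNorm_nonneg) lpNorm_nonneg
  calc
    ‖fun x => ε * v x‖₂ + ‖θ‖₂ + ‖grad v‖₂
      ≤ (M + 1) * (‖θ‖₂ + ‖grad v‖₂) + ‖a‖₂ := by linarith [h.lpNorm_mul_le hGM hbM]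
    _ ≤ (M + 1) * (2 / κ * (‖a‖₂ + (√d * ‖q‖₂ + ‖B‖₂))) + ‖a‖₂ := by
        gcongr
        exact h.energy_estimate hκ hG hm hq0
    _ ≤ ((M + 1) * (2 / κ) + 1) * (‖a‖₂ + (√d * ‖q‖₂ + ‖B‖₂)) := by linarith

theorem exists_pos_forall_lpNorm_le {p : (Fin d → ℝ) → ℝ} (hG : Continuous G)
    (hGpos : ∀ x, 0 < G x) (hm : Continuous m) (hmpos : ∀ x, 0 < m x) (hb : Continuous b)
    (hq0 : ∫ x, q x ∂cubeMeasure d = 0) :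
    ∃ C, 0 < C ∧ ∀ ε A B v θ, Continuous A →
      LinearizedSol ε G m (fun x => A x - p x) q b B v θ →
      ‖fun x => ε * v x‖₂ + ‖θ‖₂ + ‖grad v‖₂ ≤ C * (‖A‖₂ + ‖B‖₂ + 1) := by
  have hcube : IsCompact (Icc (0 : Fin d → ℝ) 1) := isCompact_Icc
  obtain ⟨κG, hκG, hGκ⟩ := hcube.exists_forall_le' hG.continuousOn fun x _ => hGpos x
  obtain ⟨κm, hκm, hmκ⟩ := hcube.exists_forall_le' hm.continuousOn fun x _ => hmpos x
  obtain ⟨MG, hMG⟩ := hcube.exists_bound_of_continuousOn hG.continuousOn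
  obtain ⟨Mb, hMb⟩ := hcube.exists_bound_of_continuousOn hb.continuousOn
  have hκ : 0 < min κG κm := lt_min hκG hκm
  have hM : 0 ≤ max MG Mb := (norm_nonneg _).trans ((hMG 0 (by simp)).trans (le_max_left _ _))
  set K := (max MG Mb + 1) * (2 / min κG κm) + 1
  have hKpos : 0 < K := by positivity
  have hp0 : 0 ≤ ‖p‖₂ := lpNorm_nonneg
  have hs0 : 0 ≤ √d * ‖q‖₂ := mul_nonneg (Real.sqrt_nonneg _) lpNorm_nonneg
  refine ⟨K * (1 + ‖p‖₂ + √d * ‖q‖₂), mul_pos hKpos (by positivity), fun ε A B v θ hA h => ?_⟩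
  have hA0 : 0 ≤ ‖A‖₂ := lpNorm_nonneg
  have hB0 : 0 ≤ ‖B‖₂ := lpNorm_nonneg
  have hAp : ‖fun x => A x - p x‖₂ ≤ ‖A‖₂ + ‖p‖₂ :=
    lpNorm_sub_le (memLp_cubeMeasure_of_continuous hA 2) one_le_two
  calc
    ‖fun x => ε * v x‖₂ + ‖θ‖₂ + ‖grad v‖₂
      ≤ K * (‖fun x => A x - p x‖₂ + (√d * ‖q‖₂ + ‖B‖₂)) :=
        h.lpNorm_add_lpNorm_add_lpNorm_le hκ (fun x hx => (min_le_left _ _).trans (hGκ x hx))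
          (fun x hx => (min_le_right _ _).trans (hmκ x hx))
          (fun x hx => (hMG x hx).trans (le_max_left _ _))
          (fun x hx => (hMb x hx).trans (le_max_right _ _)) hq0
    _ ≤ K * ((1 + ‖p‖₂ + √d * ‖q‖₂) * (‖A‖₂ + ‖B‖₂ + 1)) := by
        gcongr
        nlinarith [mul_nonneg (add_nonneg hp0 hs0) (add_nonneg hA0 hB0)]
    _ = K * (1 + ‖p‖₂ + √d * ‖q‖₂) * (‖A‖₂ + ‖B‖₂ + 1) := (mul_assoc _ _ _).symm

end LinearizedSol

theorem linearizedSol_of_equations {ε : ℝ} {G m p q A v θ : (Fin d → ℝ) → ℝ}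
    {b B : (Fin d → ℝ) → Fin d → ℝ} (hG : Continuous G) (hm : ContDiff ℝ 1 m) (hmper : ZPer d m)
    (hp : Continuous p) (hq : Continuous q) (hb : ∀ i, ContDiff ℝ 1 fun x => b x i)
    (hbper : ∀ i, ZPer d fun x => b x i) (hA : Continuous A)
    (hB : ∀ i, ContDiff ℝ 1 fun x => B x i) (hBper : ∀ i, ZPer d fun x => B x i)
    (hv : ContDiff ℝ 2 v) (hθ : ContDiff ℝ 1 θ) (hvper : ZPer d v) (hθper : ZPer d θ)
    (hj : ∀ x, ε * v x + p x + ∑ i, b x i * pd d i v x = G x * θ x + A x)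
    (fp : ∀ x, ε * θ x - divUp d m v x - ∑ i, pd d i (fun y => θ y * b y i) x
        = q x + ∑ i, pd d i (fun y => B y i) x) :
    LinearizedSol ε G m (fun x => A x - p x) q (fun x => WithLp.toLp 2 (b x))
      (fun x => WithLp.toLp 2 (B x)) v θ := by
  have hb' : ContDiff ℝ 1 fun x => WithLp.toLp 2 (b x) := contDiff_euclidean.mpr hb
  have hB' : ContDiff ℝ 1 fun x => WithLp.toLp 2 (B x) := contDiff_euclidean.mpr hB
  have hmv : ContDiff ℝ 1 fun x => m x • grad v x := hm.smul (contDiff_grad hv)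
  have hθb : ContDiff ℝ 1 fun x => θ x • WithLp.toLp 2 (b x) := hθ.smul hb'
  exact
    { cont_G := hG
      cont_m := hm.continuous
      cont_a := hA.sub hp
      cont_q := hq
      cont_B := hB'.continuous
      cont_θ := hθ.continuous
      reg_v := hv.of_le one_le_two
      reg_flux := (hmv.add hθb).add hB'
      per_v := hvper
      per_flux := fun i => ((hmper.mul (hvper.pd i)).add (hθper.mul (hbper i))).add (hBper i)
      hj := fun x => by
        rw [inner_grad]
        linear_combination hj x
      fp := fun x => by
        rw [divergence_flux (hm.differentiable one_ne_zero x)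
          ((contDiff_grad hv).differentiable one_ne_zero x) (hθ.differentiable one_ne_zero x)
          (hb'.differentiable one_ne_zero x) (hB'.differentiable one_ne_zero x)]
        simp only [divergence, PiLp.smul_apply, smul_eq_mul]
        linear_combination fp x }

theorem ErgSol.integral_one_sub_eq_zero {α H : ℝ} {g : ℝ → ℝ} {V u m : (Fin d → ℝ) → ℝ}
    (h : ErgSol d α g V u m H) : ∫ x in Icc (0 : Fin d → ℝ) 1, (1 - m x) = 0 := by
  rw [integral_sub (integrable_const _) (integrable_cubeMeasure_of_continuous h.reg_m.1.continuous),
    h.m_mass]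
  simp

end Torus

theorem stmt17_general {d : ℕ} {G m p q : (Fin d → ℝ) → ℝ} {b : (Fin d → ℝ) → Fin d → ℝ}
    (hG : Continuous G) (hGpos : ∀ x, 0 < G x)
    (hm : ContDiff ℝ 1 m) (hmper : ZPer d m) (hmpos : ∀ x, 0 < m x)
    (hb : ∀ i, ContDiff ℝ 1 fun x => b x i) (hbper : ∀ i, ZPer d fun x => b x i)
    (hp : Continuous p) (hq : Continuous q) (hq0 : ∫ x in Icc (0 : Fin d → ℝ) 1, q x = 0) :
    ∃ C : ℝ, 0 < C ∧ ∀ ε : ℝ, ∀ A : (Fin d → ℝ) → ℝ, ∀ B : (Fin d → ℝ) → Fin d → ℝ,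
      Continuous A → (∀ i, ContDiff ℝ 1 fun x => B x i) → (∀ i, ZPer d fun x => B x i) →
      ∀ v θ : (Fin d → ℝ) → ℝ,
        ContDiff ℝ 2 v → ContDiff ℝ 1 θ → ZPer d v → ZPer d θ →
        (∀ x, ε * v x + p x + ∑ i, b x i * pd d i v x = G x * θ x + A x) →
        (∀ x, ε * θ x - divUp d m v x - ∑ i, pd d i (fun y => θ y * b y i) x
            = q x + ∑ i, pd d i (fun y => B y i) x) →
        Real.sqrt (∫ x in Icc (0 : Fin d → ℝ) 1, (ε * v x) ^ 2)
          + Real.sqrt (∫ x in Icc (0 : Fin d → ℝ) 1, θ x ^ 2)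
          + Real.sqrt (∫ x in Icc (0 : Fin d → ℝ) 1, gradSq d v x)
        ≤ C * (Real.sqrt (∫ x in Icc (0 : Fin d → ℝ) 1, A x ^ 2)
          + Real.sqrt (∫ x in Icc (0 : Fin d → ℝ) 1, ∑ i, B x i ^ 2) + 1) := by
  obtain ⟨C, hC, hest⟩ := LinearizedSol.exists_pos_forall_lpNorm_le hG hGpos hm.continuous hmpos
    (contDiff_euclidean.mpr hb : ContDiff ℝ 1 fun x => WithLp.toLp 2 (b x)).continuous hq0
  refine ⟨C, hC, fun ε A B hA hB hBper v θ hv hθ hvper hθper hj fp => ?_⟩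
  have h := hest ε A _ v θ hA
    (linearizedSol_of_equations hG hm hmper hp hq hb hbper hA hB hBper hv hθ hvper hθper hj fp)
  have hB' : ContDiff ℝ 1 fun x => WithLp.toLp 2 (B x) := contDiff_euclidean.mpr hB
  have hεv : Continuous fun x => ε * v x := continuous_const.mul hv.continuous
  have hgrad := continuous_grad (hv.of_le one_le_two)
  rw [lpNorm_two_eq_sqrt_integral_norm_sq hεv.aestronglyMeasurable,
    lpNorm_two_eq_sqrt_integral_norm_sq hθ.continuous.aestronglyMeasurable,
    lpNorm_two_eq_sqrt_integral_norm_sq hgrad.aestronglyMeasurable,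
    lpNorm_two_eq_sqrt_integral_norm_sq hA.aestronglyMeasurable,
    lpNorm_two_eq_sqrt_integral_norm_sq hB'.continuous.aestronglyMeasurable] at h
  simp only [norm_grad_sq, Real.norm_eq_abs, sq_abs] at h
  simpa only [EuclideanSpace.real_norm_sq_eq] using h

theorem stmt17 (d : ℕ) (α : ℝ) (hα0 : 0 < α) (hα1 : α < 1)
    (g : ℝ → ℝ) (V : (Fin d → ℝ) → ℝ) (hg : Ghyp α g) (hV : Vhyp d α V)
    (hgsm : ContDiffOn ℝ (⊤ : ℕ∞) g (Ioi 0))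
    (u m : (Fin d → ℝ) → ℝ) (H : ℝ) (herg : ErgSol d α g V u m H)
    (husm : ContDiff ℝ (⊤ : ℕ∞) u) (hmsm : ContDiff ℝ (⊤ : ℕ∞) m)
    (hmpos : ∀ x, 0 < m x)
    (γ : ℝ) (hγ : 0 < γ) (hgm : ∀ x, γ ≤ deriv g (m x)) :
    ∃ C : ℝ, 0 < C ∧ ∀ ε : ℝ, 0 < ε →
      ∀ A : (Fin d → ℝ) → ℝ, ∀ B : (Fin d → ℝ) → Fin d → ℝ,
        ContDiff ℝ (⊤ : ℕ∞) A → ZPer d A →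
        ContDiff ℝ (⊤ : ℕ∞) B → (∀ i, ZPer d (fun x => B x i)) →
        ∀ v θ : (Fin d → ℝ) → ℝ,
          ContDiff ℝ 2 v → ContDiff ℝ 1 θ → ZPer d v → ZPer d θ →
          (∀ x, ε * v x + u x + ∑ i, pd d i u x * pd d i v x
              = deriv g (m x) * θ x + A x) →
          (∀ x, ε * θ x - divUp d m v x - divUp d θ u x
              = 1 - m x + ∑ i, pd d i (fun y => B y i) x) →
          Real.sqrt (∫ x in Icc (0 : Fin d → ℝ) 1, (ε * v x) ^ 2)
            + Real.sqrt (∫ x in Icc (0 : Fin d → ℝ) 1, θ x ^ 2)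
            + Real.sqrt (∫ x in Icc (0 : Fin d → ℝ) 1, gradSq d v x)
          ≤ C * (Real.sqrt (∫ x in Icc (0 : Fin d → ℝ) 1, A x ^ 2)
            + Real.sqrt (∫ x in Icc (0 : Fin d → ℝ) 1, ∑ i, B x i ^ 2) + 1) := by
  obtain ⟨C, hC, hest⟩ := stmt17_general
    ((hgsm.continuousOn_deriv_of_isOpen isOpen_Ioi (by simp)).comp_continuous
      herg.reg_m.1.continuous hmpos)
    (fun x => hγ.trans_le (hgm x)) herg.reg_m.1 herg.per_m hmpos
    (contDiff_pd herg.reg_u.1) herg.per_u.pd herg.reg_u.1.continuous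
    (continuous_const.sub herg.reg_m.1.continuous) herg.integral_one_sub_eq_zero
  exact ⟨C, hC, fun ε _ A B hA _ hB hBper => hest ε A B hA.continuous
    (fun i => (contDiff_pi.mp hB i).of_le (by simp)) hBper⟩
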